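/- Let {A_n}_{n=1}^{n_s}, {B_n}_{n=1}^{n_s} be real L×L matrices forming an amicable orthogonal design, let s̄_1, s̃_1, …, s̄_{n_s}, s̃_{n_s} be real numbers, and set X = (1/√n_s) Σ_{n′=1}^{n_s} ( s̄_{n′} A_{n′} + i s̃_{n′} B_{n′} ). Then for every complex L×L Hermitian matrix H and every index n, Im( tr( B_n · X^H · H ) ) = −(s̃_n/√n_s) · Re( tr(H) ). -/

import Mathlib

open Matrix Complex

/-- An amicable orthogonal design: real `L × L` matrices `A n`, `B n` (`n = 1, …, n_s`)
satisfying conditions (34) of the paper. -/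
def IsAmicableDesign {L ns : ℕ} (A B : Fin ns → Matrix (Fin L) (Fin L) ℝ) : Prop :=
  (∀ n, A n * (A n)ᵀ = 1) ∧ (∀ n, B n * (B n)ᵀ = 1) ∧
  (∀ n n', n ≠ n' → A n * (A n')ᵀ = -(A n' * (A n)ᵀ)) ∧
  (∀ n n', n ≠ n' → B n * (B n')ᵀ = -(B n' * (B n)ᵀ)) ∧
  (∀ n n', A n * (B n')ᵀ = B n' * (A n)ᵀ)

/-- The space-time code matrix `X = (1/√n_s) Σ_n (s̄_n A_n + i s̃_n B_n)`, with the real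
matrices viewed as complex entrywise. -/
noncomputable def codeX {L ns : ℕ} (A B : Fin ns → Matrix (Fin L) (Fin L) ℝ)
    (sbar stil : Fin ns → ℝ) : Matrix (Fin L) (Fin L) ℂ :=
  ((Real.sqrt ns : ℂ))⁻¹ •
    ∑ n, ((sbar n : ℂ) • (A n).map Complex.ofReal
      + ((stil n : ℂ) * Complex.I) • (B n).map Complex.ofReal)

namespace Matrix

variable {m n : Type*}

lemma conjTranspose_map_ofReal (M : Matrix m n ℝ) :
    (M.map Complex.ofReal)ᴴ = Mᵀ.map Complex.ofReal := by
  ext i j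
  simp

variable [Fintype m]

lemma im_trace_mul_eq_zero_of_isHermitian {M H : Matrix m m ℂ}
    (hM : M.IsHermitian) (hH : H.IsHermitian) : (trace (M * H)).im = 0 := by
  rw [← Complex.conj_eq_iff_im, starRingEnd_apply, ← trace_conjTranspose, conjTranspose_mul,
    hM.eq, hH.eq, trace_mul_comm]

lemma re_trace_mul_eq_zero_of_conjTranspose_eq_neg {M H : Matrix m m ℂ}
    (hM : Mᴴ = -M) (hH : H.IsHermitian) : (trace (M * H)).re = 0 := by
  have h : star (trace (M * H)) = -trace (M * H) := by
    rw [← trace_conjTranspose, conjTranspose_mul, hM, hH.eq, trace_mul_comm, neg_mul, trace_neg]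
  have hre := congrArg Complex.re h
  simp only [Complex.star_def, Complex.conj_re, Complex.neg_re] at hre
  linarith

lemma map_ofReal_mul (M N : Matrix m m ℝ) :
    M.map Complex.ofReal * N.map Complex.ofReal = (M * N).map Complex.ofReal :=
  (Matrix.map_mul (f := Complex.ofRealHom)).symm

end Matrix

namespace IsAmicableDesign

variable {L ns : ℕ} {A B : Fin ns → Matrix (Fin L) (Fin L) ℝ}

lemma im_trace_mul_transpose_mul (hAB : IsAmicableDesign A B)
    {H : Matrix (Fin L) (Fin L) ℂ} (hH : H.IsHermitian) (n k : Fin ns) :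
    (trace ((B n * (A k)ᵀ).map Complex.ofReal * H)).im = 0 := by
  refine im_trace_mul_eq_zero_of_isHermitian ?_ hH
  rw [IsHermitian, conjTranspose_map_ofReal, transpose_mul, transpose_transpose,
    hAB.2.2.2.2 k n]

lemma re_trace_mul_transpose_mul (hAB : IsAmicableDesign A B)
    {H : Matrix (Fin L) (Fin L) ℂ} (hH : H.IsHermitian) (n k : Fin ns) :
    (trace ((B n * (B k)ᵀ).map Complex.ofReal * H)).re = if k = n then (trace H).re else 0 := by
  split_ifs with hkn
  · subst hkn
    rw [hAB.2.1, Matrix.map_one _ Complex.ofReal_zero Complex.ofReal_one, one_mul]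
  · refine re_trace_mul_eq_zero_of_conjTranspose_eq_neg ?_ hH
    rw [conjTranspose_map_ofReal, transpose_mul, transpose_transpose, hAB.2.2.2.1 k n hkn]
    ext i j
    simp

end IsAmicableDesign

lemma trace_mul_codeX_conjTranspose_mul {L ns : ℕ} (A B : Fin ns → Matrix (Fin L) (Fin L) ℝ)
    (sbar stil : Fin ns → ℝ) (M : Matrix (Fin L) (Fin L) ℝ) (H : Matrix (Fin L) (Fin L) ℂ) :
    trace (M.map Complex.ofReal * (codeX A B sbar stil)ᴴ * H)
      = (((Real.sqrt ns)⁻¹ : ℝ) : ℂ) *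
        ∑ k, ((sbar k : ℂ) * trace ((M * (A k)ᵀ).map Complex.ofReal * H)
          - (stil k : ℂ) * Complex.I * trace ((M * (B k)ᵀ).map Complex.ofReal * H)) := by
  simp only [codeX, conjTranspose_smul, conjTranspose_sum, conjTranspose_add,
    conjTranspose_map_ofReal, Matrix.mul_smul, Matrix.smul_mul, Matrix.mul_sum, Matrix.sum_mul,
    Matrix.mul_add, Matrix.add_mul, trace_smul, trace_sum, trace_add, map_ofReal_mul]
  simp [sub_eq_add_neg]

/-- Companion of Lemma 1: for an amicable orthogonal design and any Hermitian `H`,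
`Im(tr(B_n Xᴴ H)) = -(s̃_n/√n_s) Re(tr H)`. -/
theorem im_trace_Bn_codeX_conjTranspose_hermitian {L ns : ℕ}
    (A B : Fin ns → Matrix (Fin L) (Fin L) ℝ) (hAB : IsAmicableDesign A B)
    (sbar stil : Fin ns → ℝ)
    (H : Matrix (Fin L) (Fin L) ℂ) (hH : Hᴴ = H) (n : Fin ns) :
    (Matrix.trace ((B n).map Complex.ofReal * (codeX A B sbar stil)ᴴ * H)).im
      = -(stil n / Real.sqrt ns) * (Matrix.trace H).re := by
  rw [trace_mul_codeX_conjTranspose_mul, Complex.im_ofReal_mul, Complex.im_sum]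
  have hterm (k : Fin ns) :
      ((sbar k : ℂ) * trace ((B n * (A k)ᵀ).map Complex.ofReal * H)
        - (stil k : ℂ) * Complex.I * trace ((B n * (B k)ᵀ).map Complex.ofReal * H)).im
      = if k = n then -(stil k * (trace H).re) else 0 := by
    rw [Complex.sub_im, Complex.im_ofReal_mul, mul_assoc, Complex.im_ofReal_mul, Complex.I_mul_im,
      hAB.im_trace_mul_transpose_mul hH, hAB.re_trace_mul_transpose_mul hH]
    split_ifs <;> simp
  simp only [hterm, Finset.sum_ite_eq', Finset.mem_univ, if_true]
  ring
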